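/- arXiv:2309.15398 — 4 statements merged into one kernel-verified Lean document; each statement's English description precedes it below -/
import Mathlib

section
/- Let k ≥ 1 and let w = (w_α)_{α∈ℕⁿ,|α|≤2k} ∈ ℝ^{ℕⁿ_{2k}}. If the moment matrix M_k[w] is positive semidefinite and w_0 = 0 (the entry indexed by the zero multi-index), then w_α = 0 for all α with |α| ≤ 2k − 2. -/
open MvPolynomial MeasureTheory

noncomputable section

/-- The space of real polynomials in `n` variables. -/
abbrev RPoly (n : ℕ) : Type := MvPolynomial (Fin n) ℝ

/-- The degree `|α|` of a monomial power `α`. -/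
def mdeg {n : ℕ} (α : Fin n →₀ ℕ) : ℕ := ∑ i, α i

/-- `p` is a sum of squares of polynomials. -/
def IsSOS {n : ℕ} (p : RPoly n) : Prop :=
  ∃ L : List (RPoly n), p = (L.map (fun q => q ^ 2)).sum

/-- The truncation `QM(g)_k` of the quadratic module generated by `(g j)_{j ∈ S}`. -/
def QModDeg {n : ℕ} {κ : Type} (S : Finset κ) (g : κ → RPoly n) (k : ℕ) :
    Set (RPoly n) :=
  {p | ∃ σ0 : RPoly n, ∃ σ : κ → RPoly n,
      IsSOS σ0 ∧ σ0.totalDegree ≤ k ∧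
      (∀ j ∈ S, IsSOS (σ j) ∧ (σ j).totalDegree + (g j).totalDegree ≤ k) ∧
      p = σ0 + ∑ j ∈ S, g j * σ j}

/-- The truncation `Ideal(h)_k` of the ideal generated by `(h j)_{j ∈ S}`. -/
def IdealDeg {n : ℕ} {ι : Type} (S : Finset ι) (h : ι → RPoly n) (k : ℕ) :
    Set (RPoly n) :=
  {p | ∃ q : ι → RPoly n,
      (∀ j ∈ S, (q j).totalDegree + (h j).totalDegree ≤ k) ∧
      p = ∑ j ∈ S, h j * q j}

/-- The quadratic module `QM(g)` generated by `(g j)_{j ∈ S}`. -/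
def QModFull {n : ℕ} {κ : Type} (S : Finset κ) (g : κ → RPoly n) : Set (RPoly n) :=
  {p | ∃ σ0 : RPoly n, ∃ σ : κ → RPoly n,
      IsSOS σ0 ∧ (∀ j ∈ S, IsSOS (σ j)) ∧ p = σ0 + ∑ j ∈ S, g j * σ j}

/-- The ideal `Ideal(h)` generated by `(h j)_{j ∈ S}`. -/
def IdealFull {n : ℕ} {ι : Type} (S : Finset ι) (h : ι → RPoly n) : Set (RPoly n) :=
  (Ideal.span (h '' (S : Set ι)) : Ideal (RPoly n))

/-- `Ideal(c_eq) + QM(c_in)` is archimedean. -/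
def ArchimedeanQM {n : ℕ} (E I : Finset ℕ) (c : ℕ → RPoly n) : Prop :=
  ∃ R : ℝ, 0 < R ∧ ∃ p1 ∈ IdealFull E c, ∃ p2 ∈ QModFull I c,
    (C R : RPoly n) - ∑ i, (X i : RPoly n) ^ 2 = p1 + p2

/-- The basic closed semialgebraic set `K`. -/
def Kset {n : ℕ} (E I : Finset ℕ) (c : ℕ → RPoly n) : Set (Fin n → ℝ) :=
  {x | (∀ j ∈ E, eval x (c j) = 0) ∧ (∀ j ∈ I, 0 ≤ eval x (c j))}

/-- The bilinear pairing `⟨p, y⟩ = ∑_α p_α y_α`. -/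
def pairing {n : ℕ} (p : RPoly n) (y : (Fin n →₀ ℕ) → ℝ) : ℝ :=
  ∑ α ∈ p.support, p.coeff α * y α

/-- Membership in the moment cone `ℛ_d(K)`: the entries `y_α`, `|α| ≤ d`, are the
moments of a finite Borel measure supported in the closed set `K`. -/
def InMomentCone {n : ℕ} (d : ℕ) (K : Set (Fin n → ℝ)) (y : (Fin n →₀ ℕ) → ℝ) : Prop :=
  ∃ μ : Measure (Fin n → ℝ), IsFiniteMeasure μ ∧ μ Kᶜ = 0 ∧
    ∀ α : Fin n →₀ ℕ, mdeg α ≤ d →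
      Integrable (fun x => ∏ i, x i ^ α i) μ ∧
      y α = ∫ x, (∏ i, x i ^ α i) ∂μ

/-- The cone `P_d(K)` of polynomials of degree at most `d` that are nonnegative on `K`. -/
def PdCone {n : ℕ} (d : ℕ) (K : Set (Fin n → ℝ)) : Set (RPoly n) :=
  {p | p.totalDegree ≤ d ∧ ∀ x ∈ K, 0 ≤ eval x p}

/-- The interior of `P_d(K)` in the coefficient topology of `ℝ[x]_d`. -/
def PdInterior {n : ℕ} (d : ℕ) (K : Set (Fin n → ℝ)) : Set (RPoly n) :=
  {p | p.totalDegree ≤ d ∧ ∃ ε : ℝ, 0 < ε ∧ ∀ q : RPoly n, q.totalDegree ≤ d →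
      (∀ α : Fin n →₀ ℕ, |q.coeff α - p.coeff α| ≤ ε) → ∀ x ∈ K, 0 ≤ eval x q}

instance degLEFintype (n t : ℕ) : Fintype {α : Fin n →₀ ℕ // mdeg α ≤ t} := by
  apply Fintype.ofInjective
    (fun a : {α : Fin n →₀ ℕ // mdeg α ≤ t} =>
      (fun i => (⟨a.1 i, by
        have h1 : a.1 i ≤ mdeg a.1 :=
          Finset.single_le_sum (fun j _ => Nat.zero_le _) (Finset.mem_univ i)
        exact Nat.lt_succ_of_le (le_trans h1 a.2)⟩ : Fin (t + 1))) :
        {α : Fin n →₀ ℕ // mdeg α ≤ t} → (Fin n → Fin (t + 1)))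
  intro a b hab
  apply Subtype.ext
  ext i
  exact congrArg Fin.val (congrFun hab i)

/-- The moment matrix `M_t[w]`, indexed by monomial powers of degree at most `t`. -/
def momentMatrix {n : ℕ} (t : ℕ) (w : (Fin n →₀ ℕ) → ℝ) :
    Matrix {α : Fin n →₀ ℕ // mdeg α ≤ t} {α : Fin n →₀ ℕ // mdeg α ≤ t} ℝ :=
  fun α β => w (α.1 + β.1)

/-- `w` admits a flat truncation: for some `d0 ≤ t ≤ k`,
`rank M_{t-dK}[w] = rank M_t[w]`. -/
def HasFlatTruncation {n : ℕ} (d0 dK k : ℕ) (w : (Fin n →₀ ℕ) → ℝ) : Prop :=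
  ∃ t : ℕ, d0 ≤ t ∧ t ≤ k ∧
    (momentMatrix (t - dK) w).rank = (momentMatrix t w).rank

/-- The gradient of a polynomial at a point. -/
def gradP {n : ℕ} (p : RPoly n) (u : Fin n → ℝ) : Fin n → ℝ :=
  fun i => eval u (pderiv i p)

/-- The Hessian of a polynomial at a point. -/
def hessP {n : ℕ} (p : RPoly n) (u : Fin n → ℝ) : Fin n → Fin n → ℝ :=
  fun i j => eval u (pderiv i (pderiv j p))

/-- The classical optimality conditions (LICQC, KKT with SCC and SOSC) at the point `u`
for the problem: minimize `F` subject to `ge j = 0` (`j ∈ Es`), `gi j ≥ 0` (`j ∈ Is`). -/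
def OptCondsAt {n : ℕ} {ι κ : Type}
    (Es : Finset ι) (ge : ι → RPoly n) (Is : Finset κ) (gi : κ → RPoly n)
    (F : RPoly n) (u : Fin n → ℝ) : Prop :=
  -- LICQC: gradients of active constraints are linearly independent
  LinearIndependent ℝ
    (Sum.elim
      (fun j : {j : ι // j ∈ Es ∧ eval u (ge j) = 0} => gradP (ge j.1) u)
      (fun j : {j : κ // j ∈ Is ∧ eval u (gi j) = 0} => gradP (gi j.1) u)) ∧
  ∃ (lamE : ι → ℝ) (lamI : κ → ℝ),
    -- KKT stationarity
    (gradP F u =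
      (∑ j ∈ Es, lamE j • gradP (ge j) u) + ∑ j ∈ Is, lamI j • gradP (gi j) u) ∧
    (∀ j ∈ Is, 0 ≤ lamI j ∧ lamI j * eval u (gi j) = 0) ∧
    -- SCC
    (∀ j ∈ Is, 0 < lamI j + eval u (gi j)) ∧
    -- SOSC
    (∀ v : Fin n → ℝ, v ≠ 0 →
      (∀ j ∈ Es, (∑ i, v i * gradP (ge j) u i) = 0) →
      (∀ j ∈ Is, eval u (gi j) = 0 → (∑ i, v i * gradP (gi j) u i) = 0) →
      0 < ∑ i, ∑ i', v i *
        ((hessP F u i i' - ∑ j ∈ Es, lamE j * hessP (ge j) u i i')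
          - ∑ j ∈ Is, lamI j * hessP (gi j) u i i') * v i')

/-- The degree-`ℓ` homogenization `x_0^ℓ p(x/x_0)` of `p`; the new variable `x_0`
is the variable of index `0` in `Fin (n+1)`. -/
def homogAux {n : ℕ} (ℓ : ℕ) (p : RPoly n) : RPoly (n + 1) :=
  ∑ α ∈ p.support,
    monomial
      (Finsupp.single (0 : Fin (n + 1)) (ℓ - mdeg α) + Finsupp.mapDomain Fin.succ α)
      (p.coeff α)

/-- The homogenization `p̃` of `p`. -/
def homogenize {n : ℕ} (p : RPoly n) : RPoly (n + 1) := homogAux p.totalDegree p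

/-- The polynomial `‖x̃‖² - 1`. -/
def sphereP (n : ℕ) : RPoly (n + 1) := (∑ i, (X i : RPoly (n + 1)) ^ 2) - 1

/-- The homogenization `K̃` of the set `K`. -/
def Khom {n : ℕ} (E I : Finset ℕ) (c : ℕ → RPoly n) : Set (Fin (n + 1) → ℝ) :=
  {x | (∀ j ∈ E, eval x (homogenize (c j)) = 0) ∧
       (∀ j ∈ I, 0 ≤ eval x (homogenize (c j))) ∧
       (∑ i, (x i) ^ 2) = 1 ∧ 0 ≤ x 0}

/-- `K` is closed at infinity. -/
def ClosedAtInfinity {n : ℕ} (E I : Finset ℕ) (c : ℕ → RPoly n) : Prop :=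
  Khom E I c = closure (Khom E I c ∩ {x | 0 < x 0})

/-- The tuple `c̃_eq`: the homogenizations `c̃_j` together with `‖x̃‖² - 1`
(the latter indexed by `none`). -/
def gEqH {n : ℕ} (c : ℕ → RPoly n) : Option ℕ → RPoly (n + 1) :=
  fun o => o.elim (sphereP n) (fun j => homogenize (c j))

/-- The tuple `c̃_in`: the homogenizations `c̃_j` together with `x_0`
(the latter indexed by `none`). -/
def gInH {n : ℕ} (c : ℕ → RPoly n) : Option ℕ → RPoly (n + 1) :=
  fun o => o.elim (X 0) (fun j => homogenize (c j))

/-- The index set of a tuple extended by one extra entry (indexed by `none`). -/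
def OS (S : Finset ℕ) : Finset (Option ℕ) := insert none (S.image some)

/-- Feasibility of `θ` for the linear conic problem (P). -/
def PFeas {n m : ℕ} (m1 d : ℕ) (f : RPoly n) (a : Fin m → RPoly n)
    (K : Set (Fin n → ℝ)) (θ : Fin m → ℝ) : Prop :=
  (∀ i : Fin m, m1 ≤ (i : ℕ) → 0 ≤ θ i) ∧ (f - ∑ i, C (θ i) * a i) ∈ PdCone d K

/-- The optimal value `ϑ*` of the linear conic problem (P). -/
def PVal {n m : ℕ} (m1 d : ℕ) (f : RPoly n) (a : Fin m → RPoly n) (b : Fin m → ℝ)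
    (K : Set (Fin n → ℝ)) : ℝ :=
  sSup {v : ℝ | ∃ θ : Fin m → ℝ, PFeas m1 d f a K θ ∧ v = ∑ i, b i * θ i}

/-- Feasibility of `y` for the generalized moment problem (M). -/
def MFeas {n m : ℕ} (m1 d : ℕ) (a : Fin m → RPoly n) (b : Fin m → ℝ)
    (K : Set (Fin n → ℝ)) (y : (Fin n →₀ ℕ) → ℝ) : Prop :=
  InMomentCone d K y ∧
  (∀ i : Fin m, (i : ℕ) < m1 → pairing (a i) y = b i) ∧
  (∀ i : Fin m, m1 ≤ (i : ℕ) → b i ≤ pairing (a i) y)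

/-- The optimal value `φ*` of the generalized moment problem (M). -/
def MVal {n m : ℕ} (m1 d : ℕ) (f : RPoly n) (a : Fin m → RPoly n) (b : Fin m → ℝ)
    (K : Set (Fin n → ℝ)) : ℝ :=
  sInf {v : ℝ | ∃ y : (Fin n →₀ ℕ) → ℝ, MFeas m1 d a b K y ∧ v = pairing f y}

/-- The optimal value `ϑ_k` of the `k`th SOS relaxation of (P). -/
def SOSRelaxVal {n m : ℕ} {ι κ : Type} (m1 : ℕ) (f : RPoly n) (a : Fin m → RPoly n)
    (b : Fin m → ℝ) (Es : Finset ι) (ge : ι → RPoly n) (Is : Finset κ) (gi : κ → RPoly n)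
    (k : ℕ) : ℝ :=
  sSup {v : ℝ | ∃ θ : Fin m → ℝ, (∀ i : Fin m, m1 ≤ (i : ℕ) → 0 ≤ θ i) ∧
      (∃ p1 ∈ IdealDeg Es ge (2 * k), ∃ p2 ∈ QModDeg Is gi (2 * k),
        f - ∑ i, C (θ i) * a i = p1 + p2) ∧
      v = ∑ i, b i * θ i}

/-- The semidefinite constraints of the `k`th moment relaxation:
the localizing vectors of the equality constraints vanish, and the localizing
matrices of the inequality constraints and the moment matrix are positive
semidefinite (stated equivalently via the associated quadratic forms). -/
def MomRelaxPSD {n : ℕ} {ι κ : Type} (Es : Finset ι) (ge : ι → RPoly n)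
    (Is : Finset κ) (gi : κ → RPoly n) (k : ℕ) (w : (Fin n →₀ ℕ) → ℝ) : Prop :=
  (∀ j ∈ Es, ∀ p : RPoly n, p.totalDegree + (ge j).totalDegree ≤ 2 * k →
      pairing (ge j * p) w = 0) ∧
  (∀ j ∈ Is, ∀ p : RPoly n, p.totalDegree + ((gi j).totalDegree + 1) / 2 ≤ k →
      0 ≤ pairing (gi j * p ^ 2) w) ∧
  (∀ p : RPoly n, p.totalDegree ≤ k → 0 ≤ pairing (p ^ 2) w)

/-- Feasibility of `w` for the `k`th moment relaxation of (M). -/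
def GMomFeas {n m : ℕ} {ι κ : Type} (m1 : ℕ) (a : Fin m → RPoly n) (b : Fin m → ℝ)
    (Es : Finset ι) (ge : ι → RPoly n) (Is : Finset κ) (gi : κ → RPoly n) (k : ℕ)
    (w : (Fin n →₀ ℕ) → ℝ) : Prop :=
  (∀ i : Fin m, (i : ℕ) < m1 → pairing (a i) w = b i) ∧
  (∀ i : Fin m, m1 ≤ (i : ℕ) → b i ≤ pairing (a i) w) ∧
  MomRelaxPSD Es ge Is gi k w

/-- The optimal value `φ_k` of the `k`th moment relaxation of (M). -/
def GMomVal {n m : ℕ} {ι κ : Type} (m1 : ℕ) (f : RPoly n) (a : Fin m → RPoly n)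
    (b : Fin m → ℝ) (Es : Finset ι) (ge : ι → RPoly n) (Is : Finset κ) (gi : κ → RPoly n)
    (k : ℕ) : ℝ :=
  sInf {v : ℝ | ∃ w : (Fin n →₀ ℕ) → ℝ,
      GMomFeas m1 a b Es ge Is gi k w ∧ v = pairing f w}

/-- The optimal value `f_k^den` of the `k`th order relaxation with denominators. -/
def DenRelaxVal {n : ℕ} (E I : Finset ℕ) (c : ℕ → RPoly n) (f : RPoly n) (d k : ℕ) : ℝ :=
  sSup {γ : ℝ | ∃ p1 ∈ IdealDeg E c (2 * k + d), ∃ p2 ∈ QModDeg I c (2 * k + d),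
      (1 + ∑ i, (X i : RPoly n) ^ 2) ^ k * (f - C γ) = p1 + p2}


/-- The degree bound `d_K = max_j ⌈deg(c_j)/2⌉`. -/
def dKOrig {n : ℕ} (E I : Finset ℕ) (c : ℕ → RPoly n) : ℕ :=
  (E ∪ I).sup fun j => ((c j).totalDegree + 1) / 2

/-- The degree bound `d_0` for the GMP relaxations. -/
def d0GMP {n m : ℕ} (f : RPoly n) (a : Fin m → RPoly n) (E I : Finset ℕ)
    (c : ℕ → RPoly n) : ℕ :=
  max ((f.totalDegree + 1) / 2)
    (max (dKOrig E I c) (Finset.univ.sup fun i : Fin m => ((a i).totalDegree + 1) / 2))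

/-- The degree bound `d̃_K` for the homogenized constraining tuples. -/
def dKHom {n : ℕ} (E I : Finset ℕ) (c : ℕ → RPoly n) : ℕ :=
  max ((OS E).sup fun o => ((gEqH c o).totalDegree + 1) / 2)
      ((OS I).sup fun o => ((gInH c o).totalDegree + 1) / 2)

end
theorem mdeg_add_aux {n : ℕ} (a b : Fin n →₀ ℕ) : mdeg (a + b) = mdeg a + mdeg b := by
  simp [mdeg, Finset.sum_add_distrib]

theorem exists_split_aux {n : ℕ} (α : Fin n →₀ ℕ) (m : ℕ) (hm : m ≤ mdeg α) :
    ∃ β γ : Fin n →₀ ℕ, α = β + γ ∧ mdeg β = m := by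
  induction m with
  | zero => exact ⟨0, α, by simp, by simp [mdeg]⟩
  | succ m ih =>
    obtain ⟨β, γ, h, hβ⟩ := ih (by omega)
    have hγ : mdeg γ ≠ 0 := by
      have := mdeg_add_aux β γ
      rw [← h] at this
      omega
    obtain ⟨i, -, hi⟩ := Finset.exists_ne_zero_of_sum_ne_zero hγ
    have hle : Finsupp.single i 1 ≤ γ := by
      rw [Finsupp.single_le_iff]; omega
    refine ⟨β + Finsupp.single i 1, γ - Finsupp.single i 1, ?_, ?_⟩
    · rw [add_assoc, add_tsub_cancel_of_le hle, h]
    · rw [mdeg_add_aux, hβ]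
      simp [mdeg, Finsupp.single_apply]

theorem psd_minor_aux {n k : ℕ} (w : (Fin n →₀ ℕ) → ℝ)
    (hpsd : (momentMatrix k w).PosSemidef) (β γ : Fin n →₀ ℕ)
    (hβ : mdeg β ≤ k) (hγ : mdeg γ ≤ k) (h : w (β + β) = 0) : w (β + γ) = 0 := by
  have hd := (hpsd.submatrix ![⟨β, hβ⟩, ⟨γ, hγ⟩]).det_nonneg
  rw [Matrix.det_fin_two] at hd
  simp only [Matrix.submatrix_apply, momentMatrix, Matrix.cons_val_zero,
    Matrix.cons_val_one, h, add_comm γ β] at hd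
  nlinarith [sq_nonneg (w (β + γ))]

/-- if the moment matrix `M_k[w]` is positive semidefinite and
`w_0 = 0`, then `w_α = 0` for all `|α| ≤ 2k - 2`. -/
theorem statement_13
    (n k : ℕ) (hk : 1 ≤ k) (w : (Fin n →₀ ℕ) → ℝ)
    (hpsd : (momentMatrix k w).PosSemidef)
    (h0 : w 0 = 0) :
    ∀ α : Fin n →₀ ℕ, mdeg α ≤ 2 * k - 2 → w α = 0 := by
  intro α
  induction hd : mdeg α using Nat.strong_induction_on generalizing α with
  | _ d ih =>
    intro hle
    obtain ⟨β, γ, h, hβ⟩ := exists_split_aux α (mdeg α - k) (by omega)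
    have hs := mdeg_add_aux β γ
    rw [← h] at hs
    rw [h]
    by_cases hk' : mdeg α ≤ k
    · have hb0 : β = 0 := by
        have h1 : mdeg β = 0 := by omega
        ext i
        simpa using (Finset.sum_eq_zero_iff.mp h1) i (Finset.mem_univ i)
      exact psd_minor_aux w hpsd β γ (by omega) (by omega) (by simp [hb0, h0])
    · refine psd_minor_aux w hpsd β γ (by omega) (by omega) ?_
      have h2 := mdeg_add_aux β β
      exact ih _ (by omega) (β + β) rfl (by omega)
end

section
/- In ℝ[x_1,…,x_6], let c_1 = x_1² + x_2² + x_3² + x_4² + x_5² + x_6² − 2, c_2 = 2(x_1² + x_2² + x_3²) − x_4, c_3 = x_4 − 2(x_5² + x_6²). Then: (a) the polynomial x_4 − 1 vanishes at every point of the real variety V_ℝ(c_1,c_2,c_3) = {x ∈ ℝ⁶ : c_1(x) = c_2(x) = c_3(x) = 0}; (b) x_4 − 1 does not belong to the ideal of ℝ[x_1,…,x_6] generated by c_1, c_2, c_3. In particular, this ideal is not real radical. -/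
open MvPolynomial

/-- Example 3.5: for `c₁ = ∑ xᵢ² - 2`, `c₂ = 2(x₁²+x₂²+x₃²) - x₄`,
`c₃ = x₄ - 2(x₅²+x₆²)` in `ℝ[x₁,…,x₆]`, the polynomial `x₄ - 1` vanishes on the real
variety `V_ℝ(c₁,c₂,c₃)` but does not belong to the ideal generated by `c₁, c₂, c₃`;
in particular this ideal is not real radical. -/
theorem statement_17
    (c1 c2 c3 : MvPolynomial (Fin 6) ℝ)
    (hc1 : c1 = X 0 ^ 2 + X 1 ^ 2 + X 2 ^ 2 + X 3 ^ 2 + X 4 ^ 2 + X 5 ^ 2 - C 2)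
    (hc2 : c2 = C 2 * (X 0 ^ 2 + X 1 ^ 2 + X 2 ^ 2) - X 3)
    (hc3 : c3 = X 3 - C 2 * (X 4 ^ 2 + X 5 ^ 2)) :
    (∀ x : Fin 6 → ℝ, eval x c1 = 0 → eval x c2 = 0 → eval x c3 = 0 →
      eval x (X 3 - C 1 : MvPolynomial (Fin 6) ℝ) = 0) ∧
    (X 3 - C 1 : MvPolynomial (Fin 6) ℝ) ∉ Ideal.span {c1, c2, c3} := by
  subst hc1 hc2 hc3
  constructor
  · intro x h1 h2 h3
    simp only [map_sub, map_add, map_mul, map_pow, eval_X, eval_C] at h1 h2 h3 ⊢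
    have hpos : 0 ≤ x 3 := by nlinarith [sq_nonneg (x 4), sq_nonneg (x 5)]
    have h : (x 3 - 1) * (x 3 + 2) = 0 := by nlinarith
    rcases mul_eq_zero.mp h with h | h
    · exact h
    · linarith
  · intro hmem
    let p : Fin 6 → ℂ := ![Complex.I, 0, 0, -2, Complex.I, 0]
    let φ : MvPolynomial (Fin 6) ℝ →+* ℂ := eval₂Hom (algebraMap ℝ ℂ) p
    have hX : ∀ i, φ (X i) = p i := fun i => eval₂Hom_X' _ _ i
    have hC : ∀ r : ℝ, φ (C r) = (r : ℂ) := fun r => eval₂Hom_C _ _ r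
    have p0 : p 0 = Complex.I := rfl
    have p1 : p 1 = 0 := rfl
    have p2 : p 2 = 0 := rfl
    have p3 : p 3 = -2 := rfl
    have p4 : p 4 = Complex.I := rfl
    have p5 : p 5 = 0 := rfl
    have h : (X 3 - C 1 : MvPolynomial (Fin 6) ℝ) ∈ RingHom.ker φ := by
      refine Ideal.span_le.mpr ?_ hmem
      rintro q (rfl | rfl | rfl) <;>
        simp only [SetLike.mem_coe, RingHom.mem_ker, map_sub, map_add, map_mul, map_pow,
          hX, hC, p0, p1, p2, p3, p4, p5, Complex.I_sq] <;> norm_num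
    simp only [RingHom.mem_ker, map_sub, hX, hC, p3] at h
    norm_num at h
end

section
/- In ℝ[x_0,x_1,x_2,x_3], let g_1 = x_1x_2x_3, g_2 = x_3(x_1² + x_2² + x_3² + x_2x_0), g_3 = x_2(x_2 + x_3), g_4 = x_0² + x_1² + x_2² + x_3² − 1. Then: (a) the polynomial x_1x_3 vanishes at every point of the real variety V_ℝ(g_1,g_2,g_3,g_4) = {x̃ ∈ ℝ⁴ : g_1(x̃) = g_2(x̃) = g_3(x̃) = g_4(x̃) = 0}; (b) x_1x_3 does not belong to the ideal of ℝ[x_0,x_1,x_2,x_3] generated by g_1, g_2, g_3, g_4. In particular, this ideal is not real radical. -/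
open MvPolynomial

/-- Example 4.5: in `ℝ[x₀,x₁,x₂,x₃]`, with
`g₁ = x₁x₂x₃`, `g₂ = x₃(x₁²+x₂²+x₃²+x₂x₀)`, `g₃ = x₂(x₂+x₃)`,
`g₄ = x₀²+x₁²+x₂²+x₃²-1`, the polynomial `x₁x₃` vanishes on the real variety
`V_ℝ(g₁,g₂,g₃,g₄)` but does not belong to the ideal generated by `g₁,g₂,g₃,g₄`;
in particular this ideal is not real radical. -/
theorem statement_18
    (g1 g2 g3 g4 : MvPolynomial (Fin 4) ℝ)
    (hg1 : g1 = X 1 * X 2 * X 3)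
    (hg2 : g2 = X 3 * (X 1 ^ 2 + X 2 ^ 2 + X 3 ^ 2 + X 2 * X 0))
    (hg3 : g3 = X 2 * (X 2 + X 3))
    (hg4 : g4 = X 0 ^ 2 + X 1 ^ 2 + X 2 ^ 2 + X 3 ^ 2 - C 1) :
    (∀ x : Fin 4 → ℝ, eval x g1 = 0 → eval x g2 = 0 → eval x g3 = 0 → eval x g4 = 0 →
      eval x (X 1 * X 3 : MvPolynomial (Fin 4) ℝ) = 0) ∧
    (X 1 * X 3 : MvPolynomial (Fin 4) ℝ) ∉ Ideal.span {g1, g2, g3, g4} := by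
  subst hg1 hg2 hg3 hg4
  constructor
  · intro x h1 h2 h3 h4
    simp only [map_mul, map_add, map_pow, eval_X] at h1 h2 ⊢
    by_contra h
    have h10 : x 1 ≠ 0 := left_ne_zero_of_mul h
    have h30 : x 3 ≠ 0 := right_ne_zero_of_mul h
    have h20 : x 2 = 0 := by simpa [h10, h30] using h1
    have h5 := (mul_eq_zero.mp h2).resolve_left h30
    rw [h20] at h5
    have := pow_pos (abs_pos.mpr h10) 2
    rw [sq_abs] at this
    nlinarith [sq_nonneg (x 3)]
  · intro h
    let φ : MvPolynomial (Fin 4) ℝ →ₐ[ℝ] ℂ := aeval ![1, 1, 0, Complex.I]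
    have hle : Ideal.span {X 1 * X 2 * X 3, X 3 * (X 1 ^ 2 + X 2 ^ 2 + X 3 ^ 2 + X 2 * X 0),
        X 2 * (X 2 + X 3), X 0 ^ 2 + X 1 ^ 2 + X 2 ^ 2 + X 3 ^ 2 - C 1}
        ≤ RingHom.ker φ := by
      rw [Ideal.span_le]
      rintro p (rfl | rfl | rfl | rfl) <;> simp [φ, RingHom.mem_ker]
    have h' := hle h
    simp [φ, RingHom.mem_ker] at h'
end

section
/- In ℝ[x_0,x_1,x_2,x_3], let g_1 = x_1³ − x_2³ − x_3³ − x_0³, g_2 = x_0² + x_1² + x_2² + x_3² − 1, g_3 = (x_1⁴ + x_0⁴)(x_1 − x_0) + (x_1² − x_1x_0)(x_1x_2² − 2x_2x_0²). Then: (a) the polynomial x_2 + x_3 vanishes at every point of the real variety V_ℝ(g_1,g_2,g_3) = {x̃ ∈ ℝ⁴ : g_1(x̃) = g_2(x̃) = g_3(x̃) = 0}; (b) x_2 + x_3 does not belong to the ideal of ℝ[x_0,x_1,x_2,x_3] generated by g_1, g_2, g_3. In particular, this ideal is not real radical. -/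
open MvPolynomial

/-- Example 4.7: in `ℝ[x₀,x₁,x₂,x₃]`, with
`g₁ = x₁³-x₂³-x₃³-x₀³`, `g₂ = x₀²+x₁²+x₂²+x₃²-1`,
`g₃ = (x₁⁴+x₀⁴)(x₁-x₀) + (x₁²-x₁x₀)(x₁x₂²-2x₂x₀²)`, the polynomial `x₂+x₃`
vanishes on the real variety `V_ℝ(g₁,g₂,g₃)` but does not belong to the ideal
generated by `g₁,g₂,g₃`; in particular this ideal is not real radical. -/
theorem statement_19
    (g1 g2 g3 : MvPolynomial (Fin 4) ℝ)
    (hg1 : g1 = X 1 ^ 3 - X 2 ^ 3 - X 3 ^ 3 - X 0 ^ 3)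
    (hg2 : g2 = X 0 ^ 2 + X 1 ^ 2 + X 2 ^ 2 + X 3 ^ 2 - C 1)
    (hg3 : g3 = (X 1 ^ 4 + X 0 ^ 4) * (X 1 - X 0) +
      (X 1 ^ 2 - X 1 * X 0) * (X 1 * X 2 ^ 2 - C 2 * X 2 * X 0 ^ 2)) :
    (∀ x : Fin 4 → ℝ, eval x g1 = 0 → eval x g2 = 0 → eval x g3 = 0 →
      eval x (X 2 + X 3 : MvPolynomial (Fin 4) ℝ) = 0) ∧
    (X 2 + X 3 : MvPolynomial (Fin 4) ℝ) ∉ Ideal.span {g1, g2, g3} := by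
  subst hg1 hg2 hg3
  constructor
  · intro x h1 h2 h3
    simp only [map_add, map_sub, map_mul, map_pow, eval_X, eval_C] at *
    have h4 : (x 1 - x 0) * ((x 1 ^ 2) ^ 2 + (x 0 ^ 2 - x 1 * x 2) ^ 2) = 0 := by
      linear_combination h3
    have h5 : x 1 = x 0 := by
      rcases mul_eq_zero.mp h4 with h | h
      · linarith
      · have ha : (x 1 ^ 2) ^ 2 = 0 := by nlinarith [sq_nonneg (x 1 ^ 2), sq_nonneg (x 0 ^ 2 - x 1 * x 2)]
        have hb : (x 0 ^ 2 - x 1 * x 2) ^ 2 = 0 := by linarith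
        have h1' : x 1 = 0 := by simpa using ha
        rw [h1'] at hb
        have h0' : x 0 = 0 := by simpa using hb
        rw [h1', h0']
    rw [h5] at h1
    have h6 : (x 2) ^ 3 = (- x 3) ^ 3 := by linear_combination -h1
    have h7 : x 2 = - x 3 := (Odd.strictMono_pow (by decide : Odd 3)).injective h6
    linarith
  · intro hmem
    have hs : ((Real.sqrt 3 : ℝ) : ℂ) ^ 2 = 3 := by
      rw [← Complex.ofReal_pow, Real.sq_sqrt (by norm_num)]; norm_num
    have hI : Complex.I ^ 2 = -1 := Complex.I_sq
    generalize ((Real.sqrt 3 : ℝ) : ℂ) = s at hs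
    let φ : MvPolynomial (Fin 4) ℝ →ₐ[ℝ] ℂ :=
      aeval ![0, 0, (s - Complex.I) / 2, (s + Complex.I) / 2]
    have hle : Ideal.span {X 1 ^ 3 - X 2 ^ 3 - X 3 ^ 3 - X 0 ^ 3,
        X 0 ^ 2 + X 1 ^ 2 + X 2 ^ 2 + X 3 ^ 2 - C 1,
        (X 1 ^ 4 + X 0 ^ 4) * (X 1 - X 0) +
          (X 1 ^ 2 - X 1 * X 0) * (X 1 * X 2 ^ 2 - C 2 * X 2 * X 0 ^ 2)} ≤
        RingHom.ker φ := by
      rw [Ideal.span_le]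
      rintro p (rfl | rfl | rfl)
      · simp [φ, RingHom.mem_ker]
        linear_combination (-s / 4) * hs - (3 * s / 4) * hI
      · simp [φ, RingHom.mem_ker]
        linear_combination (1 / 2) * hs + (1 / 2) * hI
      · simp [φ, RingHom.mem_ker]
    have h0 := hle hmem
    simp [φ, RingHom.mem_ker] at h0
    have : s = 0 := by linear_combination h0
    rw [this] at hs
    norm_num at hs
end
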